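/- Let δ > 0 be sufficiently small, let ζ, φ ∈ X_δ, let ρ₀ be a bounded measurable axisymmetric function on ℝ³, even in x₃, supported in B̄₁, and let k ∈ C²(ℝ). Then the linear map T : X → X defined by (Tη)(x) = L⁻¹[ (ρ₀ ∘ g_ζ⁻¹) · (k' ∘ φ ∘ g_ζ⁻¹) · (η ∘ g_ζ⁻¹) ](g_ζ(x)), x ∈ B̄₁, is well defined and bounded: there exists a constant C > 0 depending only on ‖ρ₀‖_{L∞}, k and δ such that ‖Tη‖_X ≤ C‖η‖_X for every η ∈ X. -/

import Mathlib

noncomputable section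

open MeasureTheory Metric Set Filter

/-- ℝ³ with the Euclidean norm. -/
abbrev E3 := EuclideanSpace ℝ (Fin 3)
/-- ℝ⁵ with the Euclidean norm. -/
abbrev E5 := EuclideanSpace ℝ (Fin 5)

/-- Build a vector of ℝ³ from its coordinates. -/
def mk3 (a b c : ℝ) : E3 := (WithLp.equiv 2 (Fin 3 → ℝ)).symm ![a, b, c]
/-- Build a vector of ℝ⁵ from its coordinates. -/
def mk5 (a b c d e : ℝ) : E5 := (WithLp.equiv 2 (Fin 5 → ℝ)).symm ![a, b, c, d, e]

/-- The cylindrical radius r = √(x₁² + x₂²). -/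
def cylRad (x : E3) : ℝ := Real.sqrt ((x 0)^2 + (x 1)^2)

/-- The reflection (x₁, x₂, x₃) ↦ (x₁, x₂, −x₃). -/
def reflect3 (x : E3) : E3 := mk3 (x 0) (x 1) (-(x 2))

/-- Axisymmetric: a function of (r, x₃) only. -/
def Axisym (f : E3 → ℝ) : Prop := ∃ F : ℝ → ℝ → ℝ, ∀ x, f x = F (cylRad x) (x 2)

/-- Even in x₃. -/
def EvenZ (f : E3 → ℝ) : Prop := ∀ x, f (reflect3 x) = f x

/-- Five-dimensional extension of an axisymmetric function on ℝ³. -/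
def tilde (f : E3 → ℝ) (y : E5) : ℝ :=
  f (mk3 (Real.sqrt ((y 0)^2 + (y 1)^2 + (y 2)^2 + (y 3)^2)) 0 (y 4))

/-- The embedding (x₁,x₂,x₃) ↦ (x₁,x₂,0,0,x₃) of ℝ³ into ℝ⁵. -/
def emb (x : E3) : E5 := mk5 (x 0) (x 1) 0 0 (x 2)

/-- The operator L⁻¹, given by
(L⁻¹f)(x) = C₅ (x₁²+x₂²) ∫_{ℝ⁵} |(x₁,x₂,0,0,x₃) − y|⁻³ f̃(y) dy. -/
def Linv (C₅ : ℝ) (f : E3 → ℝ) (x : E3) : ℝ :=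
  C₅ * ((x 0)^2 + (x 1)^2) * ∫ y : E5, (‖emb x - y‖ ^ 3)⁻¹ * tilde f y

/-- The gradient of a function on the closed unit ball B̄₁ ⊂ ℝ³. -/
def gradB (f : E3 → ℝ) (x : E3) : E3 →L[ℝ] ℝ :=
  fderivWithin ℝ f (closedBall (0:E3) 1) x

/-- Membership in the space X: C¹ on B̄₁, axisymmetric, even in x₃, vanishing at the
origin, and with finite norm ‖f‖_X = sup_{0<|x|≤1} |∇f(x)|/|x|. -/
def InX (f : E3 → ℝ) : Prop :=
  ContDiffOn ℝ 1 f (closedBall (0:E3) 1) ∧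
  (∃ F : ℝ → ℝ → ℝ, ∀ x ∈ closedBall (0:E3) 1, f x = F (cylRad x) (x 2)) ∧
  (∀ x ∈ closedBall (0:E3) 1, f (reflect3 x) = f x) ∧
  f 0 = 0 ∧
  (∃ M : ℝ, ∀ x ∈ closedBall (0:E3) 1, ‖gradB f x‖ ≤ M * ‖x‖)

/-- ‖f‖_X ≤ M, expressed pointwise: |∇f(x)| ≤ M|x| on B̄₁. -/
def XnormLe (f : E3 → ℝ) (M : ℝ) : Prop :=
  ∀ x ∈ closedBall (0:E3) 1, ‖gradB f x‖ ≤ M * ‖x‖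

/-- Membership in X_δ, for a function extended to all of ℝ³ preserving axisymmetry,
evenness in x₃ and the X-bound ‖∇ζ(x)‖ ≤ δ|x|. -/
def InXext (δ : ℝ) (ζ : E3 → ℝ) : Prop :=
  ContDiff ℝ 1 ζ ∧ Axisym ζ ∧ EvenZ ζ ∧ ζ 0 = 0 ∧ ∀ x : E3, ‖fderiv ℝ ζ x‖ ≤ δ * ‖x‖

/-- The deformation g_ζ(x) = x (1 + ζ(x)/|x|²). -/
def gdef (ζ : E3 → ℝ) (x : E3) : E3 := (1 + ζ x / ‖x‖^2) • x

/-- The inverse deformation g_ζ⁻¹. -/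
def ginv (ζ : E3 → ℝ) : E3 → E3 := Function.invFun (gdef ζ)

/-!
Up to the factor `C₅ r²`, the operator `L⁻¹` is convolution in `ℝ⁵` with the Riesz kernel `|z|⁻³`
of the five-dimensional extension. Since `|z|⁻³` and its gradient are locally integrable on `ℝ⁵`,
regularising the kernel as `(|z|² + ε)^(-3/2)` and letting `ε → 0` gives locally uniform convergence
of the potentials and of their gradients, so the potential of a density bounded by `A` is `C¹` with
`C¹` norm of order `A` on balls. The factor `r²` then yields `|∇(L⁻¹f)(x)| ≤ B A |x|`.

The deformation `g_ζ` is a `2δ`-Lipschitz perturbation of the identity, hence a bi-Lipschitz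
homeomorphism, but it is only differentiable away from the origin. Composition with it nevertheless
preserves `C¹` regularity because the gradient of `L⁻¹f` vanishes at the fixed point `0`, and the
linear bound on the gradient survives the composition. The symmetries of `L⁻¹f` come from linear
isometries of `ℝ⁵` that leave the extended density invariant.
-/

open scoped Topology NNReal Convolution
open ContinuousLinearMap (lsmul)

/-- A mass density: a measurable function bounded by `A` and vanishing outside the closed ball of
radius `R` about the origin. -/
structure IsBoundedDensity {E : Type*} [NormedAddCommGroup E] [MeasurableSpace E]
    (h : E → ℝ) (A R : ℝ) : Prop where
  measurable : Measurable h
  abs_le : ∀ y, |h y| ≤ A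
  support_subset : Function.support h ⊆ closedBall 0 R

namespace IsBoundedDensity

section Kernel

variable {V F : Type*} [NormedAddCommGroup V] [MeasurableSpace V] {h : V → ℝ} {A R : ℝ}

lemma nonneg (hh : IsBoundedDensity h A R) : 0 ≤ A := (abs_nonneg _).trans (hh.abs_le 0)

lemma mono (hh : IsBoundedDensity h A R) {R' : ℝ} (hR : R ≤ R') : IsBoundedDensity h A R' :=
  ⟨hh.measurable, hh.abs_le, hh.support_subset.trans (closedBall_subset_closedBall hR)⟩

lemma exists_closedBall_mem_nhds (hh : IsBoundedDensity h A R) (x : V) :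
    ∃ R', IsBoundedDensity h A R' ∧ closedBall 0 R' ∈ 𝓝 x :=
  ⟨max R (‖x‖ + 1), hh.mono (le_max_left _ _),
    mem_of_superset (isOpen_ball.mem_nhds (by simp)) ball_subset_closedBall⟩

lemma mul_of_continuousOn [BorelSpace V] (hh : IsBoundedDensity h A R) {u : V → ℝ} {K : ℝ}
    (hu : ContinuousOn u (closedBall 0 R)) (hK : 0 ≤ K) (huK : ∀ x ∈ closedBall 0 R, |u x| ≤ K) :
    IsBoundedDensity (h * u) (A * K) R := by
  have hsupp : Function.support (h * u) ⊆ closedBall 0 R :=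
    (Function.support_mul_subset_left h u).trans hh.support_subset
  have hind : h * u = h * (closedBall 0 R).indicator u :=
    (indicator_eq_self.2 hsupp).symm.trans (funext fun _ ↦ indicator_mul_right _ h u)
  refine ⟨?_, fun x ↦ ?_, hsupp⟩
  · classical
    rw [hind]
    refine hh.measurable.mul ?_
    rw [← piecewise_eq_indicator]
    exact hu.measurable_piecewise continuousOn_const measurableSet_closedBall
  · by_cases hx : x ∈ closedBall 0 R
    · rw [Pi.mul_apply, abs_mul]
      exact mul_le_mul (hh.abs_le x) (huK x hx) (abs_nonneg _) hh.nonneg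
    · rw [Function.notMem_support.1 fun h ↦ hx (hsupp h), abs_zero]
      exact mul_nonneg hh.nonneg hK

variable [NormedSpace ℝ V] [FiniteDimensional ℝ V]
  {μ : Measure V} [μ.IsAddHaarMeasure]

lemma integrable (hh : IsBoundedDensity h A R) : Integrable h μ := by
  rw [← integrableOn_iff_integrable_of_support_subset hh.support_subset]
  exact Integrable.mono' (integrableOn_const measure_closedBall_lt_top.ne)
    hh.measurable.aestronglyMeasurable (Eventually.of_forall hh.abs_le)

variable [BorelSpace V] [NormedAddCommGroup F] [NormedSpace ℝ F]

lemma convolutionExists (hh : IsBoundedDensity h A R) {K : V → F} (hK : LocallyIntegrable K μ) :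
    ConvolutionExists h K (lsmul ℝ ℝ) μ := by
  intro x
  have hsupp : (Function.support fun t ↦ (lsmul ℝ ℝ : ℝ →L[ℝ] F →L[ℝ] F).flip (K t) (h (x - t))) ⊆
      closedBall x R := fun t ht ↦ by
    have : x - t ∈ Function.support h := fun h0 ↦ ht (by simp [h0])
    simpa [dist_eq_norm, norm_sub_rev] using hh.support_subset this
  rw [← convolutionExistsAt_flip]
  refine BddAbove.convolutionExistsAt _ ⟨A, ?_⟩ measurableSet_closedBall hsupp
    (hK.integrableOn_isCompact (isCompact_closedBall x R)) hh.measurable.aestronglyMeasurable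
  rintro _ ⟨y, -, rfl⟩
  exact hh.abs_le y

lemma norm_convolution_le (hh : IsBoundedDensity h A R) {K : V → F} (hK : LocallyIntegrable K μ)
    {x : V} (hx : x ∈ closedBall 0 R) :
    ‖(h ⋆[lsmul ℝ ℝ, μ] K) x‖ ≤ A * ∫ z in closedBall 0 (2 * R), ‖K z‖ ∂μ := by
  have hKi := (hK.integrableOn_isCompact (isCompact_closedBall 0 (2 * R))).norm
  rw [convolution_lsmul_swap, ← integral_const_mul, ← integral_indicator measurableSet_closedBall]
  refine norm_integral_le_of_norm_le
    (IntegrableOn.integrable_indicator (hKi.const_mul A) measurableSet_closedBall)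
    (Eventually.of_forall fun t ↦ ?_)
  by_cases ht : h (x - t) = 0
  · rw [ht, zero_smul, norm_zero]
    exact indicator_nonneg (fun z _ ↦ mul_nonneg hh.nonneg (norm_nonneg _)) t
  · have hmem : t ∈ closedBall (0 : V) (2 * R) := by
      have := mem_closedBall_zero_iff.1 (hh.support_subset ht)
      rw [mem_closedBall_zero_iff] at hx ⊢
      linarith [norm_le_norm_add_norm_sub x t]
    rw [indicator_of_mem hmem, norm_smul]
    gcongr
    exact hh.abs_le _

variable {ι : Type*} {l : Filter ι} {K : ι → V → F} {K₀ : V → F} {b : V → ℝ}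

lemma tendstoUniformlyOn_convolution [l.IsCountablyGenerated] (hh : IsBoundedDensity h A R)
    (hK : ∀ᶠ i in l, LocallyIntegrable (K i) μ) (hK₀ : LocallyIntegrable K₀ μ)
    (hb : LocallyIntegrable b μ) (hKb : ∀ᶠ i in l, ∀ᵐ z ∂μ, ‖K i z‖ ≤ b z)
    (hlim : ∀ᵐ z ∂μ, Tendsto (K · z) l (𝓝 (K₀ z))) :
    TendstoUniformlyOn (fun i ↦ h ⋆[lsmul ℝ ℝ, μ] K i) (h ⋆[lsmul ℝ ℝ, μ] K₀) l
      (closedBall 0 R) := by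
  have hL1 : Tendsto (fun i ↦ A * ∫ z in closedBall 0 (2 * R), ‖K i z - K₀ z‖ ∂μ) l (𝓝 0) := by
    have hball := isCompact_closedBall (0 : V) (2 * R)
    have hbound := (hb.integrableOn_isCompact hball).add (hK₀.integrableOn_isCompact hball).norm
    have := tendsto_integral_filter_of_dominated_convergence (l := l)
      (F := fun i z ↦ ‖K i z - K₀ z‖) (f := fun _ ↦ (0 : ℝ)) _
      (hK.mono fun i hi ↦ (hi.aestronglyMeasurable.sub hK₀.aestronglyMeasurable).norm.restrict)
      (hKb.mono fun i hi ↦ ae_restrict_of_ae <| hi.mono fun z hz ↦ by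
        rw [norm_norm]
        exact (norm_sub_le _ _).trans (add_le_add_left hz _)) hbound
      (ae_restrict_of_ae <| hlim.mono fun z hz ↦ by simpa using (hz.sub_const (K₀ z)).norm)
    simpa using this.const_mul A
  rw [Metric.tendstoUniformlyOn_iff]
  intro e he
  filter_upwards [hL1.eventually (gt_mem_nhds he), hK] with i hi hKi x hx
  have hsub : (h ⋆[lsmul ℝ ℝ, μ] (K i - K₀)) x =
      (h ⋆[lsmul ℝ ℝ, μ] K i) x - (h ⋆[lsmul ℝ ℝ, μ] K₀) x := by
    simp only [convolution_lsmul, Pi.sub_apply, smul_sub]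
    exact integral_sub (hh.convolutionExists hKi x) (hh.convolutionExists hK₀ x)
  rw [dist_comm, dist_eq_norm, ← hsub]
  exact (hh.norm_convolution_le (hKi.sub hK₀) hx).trans_lt hi

lemma hasFDerivAt_convolution (hh : IsBoundedDensity h A R) {K : V → F} {K' : V → V →L[ℝ] F}
    (hK : ∀ z, HasFDerivAt K (K' z) z) (hK' : Continuous K') {B : ℝ} (hB : ∀ z, ‖K' z‖ ≤ B)
    (x : V) : HasFDerivAt (h ⋆[lsmul ℝ ℝ, μ] K) ((h ⋆[lsmul ℝ ℝ, μ] K') x) x := by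
  have hKi : LocallyIntegrable K μ :=
    (continuous_iff_continuousAt.2 fun z ↦ (hK z).continuousAt).locallyIntegrable
  refine hasFDerivAt_integral_of_dominated_of_fderiv_le (F := fun x y ↦ h y • K (x - y))
    (F' := fun x y ↦ h y • K' (x - y)) (bound := fun y ↦ |h y| * B) univ_mem
    (Eventually.of_forall fun z ↦ (hh.convolutionExists hKi z).aestronglyMeasurable)
    (hh.convolutionExists hKi x)
    (hh.convolutionExists hK'.locallyIntegrable x).aestronglyMeasurable
    (Eventually.of_forall fun y z _ ↦ ?_) (hh.integrable.abs.mul_const B)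
    (Eventually.of_forall fun y z _ ↦ ?_)
  · rw [norm_smul]
    exact mul_le_mul_of_nonneg_left (hB _) (norm_nonneg _)
  · exact ((hasFDerivAt_comp_sub y).2 (hK (z - y))).const_smul (h y)

end Kernel

end IsBoundedDensity

section Riesz

variable {V : Type*} [NormedAddCommGroup V] {s ε : ℝ} {z : V}

/-- The Riesz kernel `‖z‖ ^ (-s)`, regularised by `ε`: it is smooth for `0 < ε`, and `ε = 0` is the
singular kernel itself. -/
def rieszKernel (s ε : ℝ) (z : V) : ℝ := (‖z‖ ^ 2 + ε) ^ (-(s / 2))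

lemma rieszKernel_zero (s : ℝ) (z : V) : rieszKernel s 0 z = ‖z‖ ^ (-s) := by
  rw [rieszKernel, add_zero, ← Real.rpow_natCast, ← Real.rpow_mul (norm_nonneg z)]
  congr 1
  push_cast
  ring

lemma rieszKernel_nonneg (hε : 0 ≤ ε) : 0 ≤ rieszKernel s ε z := by
  unfold rieszKernel
  positivity

lemma rieszKernel_le_norm_rpow (hs : 0 ≤ s) (hε : 0 ≤ ε) (hz : z ≠ 0) :
    rieszKernel s ε z ≤ ‖z‖ ^ (-s) := by
  have := norm_pos_iff.2 hz
  rw [← rieszKernel_zero]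
  exact Real.rpow_le_rpow_of_nonpos (by positivity) (by linarith) (by linarith)

lemma rieszKernel_le_rpow (hs : 0 ≤ s) (hε : 0 < ε) : rieszKernel s ε z ≤ ε ^ (-(s / 2)) :=
  Real.rpow_le_rpow_of_nonpos hε (by linarith [sq_nonneg ‖z‖]) (by linarith)

lemma tendsto_rieszKernel (hz : z ≠ 0) :
    Tendsto (fun ε ↦ rieszKernel s ε z) (𝓝[>] 0) (𝓝 (rieszKernel s 0 z)) := by
  have hcont : ContinuousAt (fun ε ↦ rieszKernel s ε z) 0 :=
    (continuousAt_const.add continuousAt_id).rpow_const (Or.inl (by simpa using hz))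
  exact hcont.tendsto.mono_left nhdsWithin_le_nhds

variable [InnerProductSpace ℝ V]

/-- The derivative of `rieszKernel s ε`. -/
def rieszKernelDeriv (s ε : ℝ) (z : V) : V →L[ℝ] ℝ := (-s * rieszKernel (s + 2) ε z) • innerSL ℝ z

lemma hasFDerivAt_rieszKernel (hε : 0 < ε) (z : V) :
    HasFDerivAt (rieszKernel s ε) (rieszKernelDeriv s ε z) z := by
  have hbase := (hasStrictFDerivAt_norm_sq z).hasFDerivAt.add_const ε
  have hpow := hbase.rpow_const (p := -(s / 2)) (Or.inl (by positivity : 0 < ‖z‖ ^ 2 + ε).ne')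
  refine hpow.congr_fderiv ?_
  rw [rieszKernelDeriv, rieszKernel, ← Nat.cast_smul_eq_nsmul ℝ, smul_smul]
  congr 1
  rw [show -(s / 2) - 1 = -((s + 2) / 2) by ring]
  push_cast
  ring

lemma norm_rieszKernelDeriv_le (hε : 0 ≤ ε) :
    ‖rieszKernelDeriv s ε z‖ ≤ |s| * rieszKernel (s + 1) ε z := by
  rw [rieszKernelDeriv, norm_smul, innerSL_apply_norm, norm_mul, norm_neg, Real.norm_eq_abs,
    Real.norm_of_nonneg (rieszKernel_nonneg hε), mul_assoc]
  gcongr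
  rcases eq_or_ne z 0 with rfl | hz
  · simpa using rieszKernel_nonneg hε
  · have := norm_pos_iff.2 hz
    have hbase : 0 < ‖z‖ ^ 2 + ε := by positivity
    calc rieszKernel (s + 2) ε z * ‖z‖
        ≤ (‖z‖ ^ 2 + ε) ^ (-((s + 2) / 2)) * (‖z‖ ^ 2 + ε) ^ (1 / 2 : ℝ) := by
          rw [← Real.sqrt_eq_rpow]
          exact mul_le_mul_of_nonneg_left (Real.le_sqrt_of_sq_le (by linarith))
            (rieszKernel_nonneg hε)
      _ = rieszKernel (s + 1) ε z := by
          rw [← Real.rpow_add hbase, rieszKernel]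
          congr 1
          ring

lemma norm_rieszKernelDeriv_le_rpow (hs : 0 ≤ s) (hε : 0 < ε) :
    ‖rieszKernelDeriv s ε z‖ ≤ |s| * ε ^ (-((s + 1) / 2)) :=
  (norm_rieszKernelDeriv_le hε.le).trans
    (mul_le_mul_of_nonneg_left (rieszKernel_le_rpow (by linarith) hε) (abs_nonneg s))

lemma continuous_rieszKernelDeriv (hε : 0 < ε) :
    Continuous (rieszKernelDeriv s ε : V → V →L[ℝ] ℝ) := by
  have : Continuous (rieszKernel (s + 2) ε : V → ℝ) :=
    Continuous.rpow_const (by fun_prop) fun z ↦ Or.inl (by positivity : 0 < ‖z‖ ^ 2 + ε).ne'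
  unfold rieszKernelDeriv
  fun_prop

lemma tendsto_rieszKernelDeriv (hz : z ≠ 0) :
    Tendsto (fun ε ↦ rieszKernelDeriv s ε z) (𝓝[>] 0) (𝓝 (rieszKernelDeriv s 0 z)) :=
  ((tendsto_rieszKernel hz).const_mul (-s)).smul_const _

variable [FiniteDimensional ℝ V] [MeasurableSpace V] [BorelSpace V]

lemma ae_ne_zero_of_finrank_pos (hV : 0 < Module.finrank ℝ V) : ∀ᵐ z : V, z ≠ 0 := by
  have := Module.nontrivial_of_finrank_pos hV
  simp [ae_iff]

lemma ae_rieszKernel_le (hs : 0 ≤ s) (hs' : s < Module.finrank ℝ V) (hε : 0 ≤ ε) :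
    ∀ᵐ z : V, rieszKernel s ε z ≤ 1 * ‖z‖ ^ (-s) := by
  filter_upwards [ae_ne_zero_of_finrank_pos (by exact_mod_cast hs.trans_lt hs')] with z hz
  simpa using rieszKernel_le_norm_rpow hs hε hz

lemma locallyIntegrable_rieszKernel (hs : 0 ≤ s) (hs' : s < Module.finrank ℝ V) (hε : 0 ≤ ε) :
    LocallyIntegrable (rieszKernel s ε : V → ℝ) := by
  have hmeas : Measurable (rieszKernel s ε : V → ℝ) := by
    unfold rieszKernel
    fun_prop
  refine locallyIntegrable_of_norm_le_rpow (by exact_mod_cast hs.trans_lt hs') hs' (C := 1)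
    ?_ hmeas.aestronglyMeasurable
  filter_upwards [ae_rieszKernel_le hs hs' hε] with z hz
  rwa [Real.norm_of_nonneg (rieszKernel_nonneg hε)]

lemma locallyIntegrable_rieszKernelDeriv (hs : 0 ≤ s) (hs' : s + 1 < Module.finrank ℝ V)
    (hε : 0 ≤ ε) : LocallyIntegrable (rieszKernelDeriv s ε : V → V →L[ℝ] ℝ) := by
  have hmeas : Measurable (rieszKernelDeriv s ε : V → V →L[ℝ] ℝ) := by
    have : Measurable fun z : V ↦ -s * rieszKernel (s + 2) ε z := by
      unfold rieszKernel
      fun_prop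
    exact this.smul (innerSL ℝ).continuous.measurable
  exact ((locallyIntegrable_rieszKernel (by positivity) hs' hε).smul |s|).mono
    hmeas.aestronglyMeasurable (Eventually.of_forall fun z ↦
      (norm_rieszKernelDeriv_le hε).trans (le_abs_self _))

namespace IsBoundedDensity

variable {h : V → ℝ} {A R : ℝ}

lemma tendstoUniformlyOn_convolution_rieszKernel (hh : IsBoundedDensity h A R) (hs : 0 ≤ s)
    (hs' : s < Module.finrank ℝ V) :
    TendstoUniformlyOn (fun ε ↦ h ⋆[lsmul ℝ ℝ] rieszKernel s ε) (h ⋆[lsmul ℝ ℝ] rieszKernel s 0)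
      (𝓝[>] 0) (closedBall 0 R) := by
  refine hh.tendstoUniformlyOn_convolution (b := rieszKernel s 0)
    (eventually_mem_nhdsWithin.mono fun ε hε ↦ locallyIntegrable_rieszKernel hs hs' (le_of_lt hε))
    (locallyIntegrable_rieszKernel hs hs' le_rfl) (locallyIntegrable_rieszKernel hs hs' le_rfl)
    (eventually_mem_nhdsWithin.mono fun ε hε ↦ ?_)
    ((ae_ne_zero_of_finrank_pos (by exact_mod_cast hs.trans_lt hs')).mono
      fun z ↦ tendsto_rieszKernel)
  filter_upwards [ae_rieszKernel_le hs hs' (le_of_lt hε)] with z hz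
  rwa [Real.norm_of_nonneg (rieszKernel_nonneg (le_of_lt hε)), rieszKernel_zero, ← one_mul (_ ^ _)]

lemma tendstoUniformlyOn_convolution_rieszKernelDeriv (hh : IsBoundedDensity h A R) (hs : 0 ≤ s)
    (hs' : s + 1 < Module.finrank ℝ V) :
    TendstoUniformlyOn (fun ε ↦ h ⋆[lsmul ℝ ℝ] rieszKernelDeriv s ε)
      (h ⋆[lsmul ℝ ℝ] rieszKernelDeriv s 0) (𝓝[>] 0) (closedBall 0 R) := by
  have hs₁ : 0 ≤ s + 1 := by linarith
  refine hh.tendstoUniformlyOn_convolution (b := |s| • rieszKernel (s + 1) 0)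
    (eventually_mem_nhdsWithin.mono fun ε hε ↦
      locallyIntegrable_rieszKernelDeriv hs hs' (le_of_lt hε))
    (locallyIntegrable_rieszKernelDeriv hs hs' le_rfl)
    ((locallyIntegrable_rieszKernel hs₁ hs' le_rfl).smul |s|)
    (eventually_mem_nhdsWithin.mono fun ε hε ↦ ?_)
    ((ae_ne_zero_of_finrank_pos (by exact_mod_cast hs₁.trans_lt hs')).mono
      fun z ↦ tendsto_rieszKernelDeriv)
  filter_upwards [ae_rieszKernel_le hs₁ hs' (le_of_lt hε)] with z hz
  rw [one_mul, ← rieszKernel_zero] at hz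
  exact (norm_rieszKernelDeriv_le (le_of_lt hε)).trans
    (mul_le_mul_of_nonneg_left hz (abs_nonneg s))

lemma hasFDerivAt_convolution_rieszKernel_of_pos (hh : IsBoundedDensity h A R) (hs : 0 ≤ s)
    (hε : 0 < ε) (x : V) :
    HasFDerivAt (h ⋆[lsmul ℝ ℝ] rieszKernel s ε) ((h ⋆[lsmul ℝ ℝ] rieszKernelDeriv s ε) x) x :=
  hh.hasFDerivAt_convolution (hasFDerivAt_rieszKernel hε) (continuous_rieszKernelDeriv hε)
    (fun _ ↦ norm_rieszKernelDeriv_le_rpow hs hε) x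

lemma continuous_convolution_rieszKernelDeriv_of_pos (hh : IsBoundedDensity h A R) (hs : 0 ≤ s)
    (hε : 0 < ε) : Continuous (h ⋆[lsmul ℝ ℝ] rieszKernelDeriv s ε) := by
  refine BddAbove.continuous_convolution_right_of_integrable _
    ⟨|s| * ε ^ (-((s + 1) / 2)), ?_⟩ hh.integrable (continuous_rieszKernelDeriv hε)
  rintro _ ⟨z, rfl⟩
  exact norm_rieszKernelDeriv_le_rpow hs hε

lemma hasFDerivAt_convolution_rieszKernel (hh : IsBoundedDensity h A R) (hs : 0 ≤ s)
    (hs' : s + 1 < Module.finrank ℝ V) (x : V) :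
    HasFDerivAt (h ⋆[lsmul ℝ ℝ] rieszKernel s 0) ((h ⋆[lsmul ℝ ℝ] rieszKernelDeriv s 0) x) x := by
  obtain ⟨R', hh', hx⟩ := hh.exists_closedBall_mem_nhds x
  have hpos : ∀ᶠ ε in 𝓝[>] (0 : ℝ), 0 < ε := self_mem_nhdsWithin
  have hunif := hh'.tendstoUniformlyOn_convolution_rieszKernelDeriv hs hs'
  exact hasFDerivAt_of_tendstoUniformlyOnFilter
    (hunif.tendstoUniformlyOnFilter.mono_right (le_principal_iff.2 hx))
    ((hpos.prod_inl _).mono fun p hp ↦ hh.hasFDerivAt_convolution_rieszKernel_of_pos hs hp p.2)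
    (mem_of_superset hx fun y ↦
      (hh'.tendstoUniformlyOn_convolution_rieszKernel hs (by linarith)).tendsto_at)

lemma continuous_convolution_rieszKernelDeriv (hh : IsBoundedDensity h A R) (hs : 0 ≤ s)
    (hs' : s + 1 < Module.finrank ℝ V) : Continuous (h ⋆[lsmul ℝ ℝ] rieszKernelDeriv s 0) := by
  refine continuous_iff_continuousAt.2 fun x ↦ ?_
  obtain ⟨R', hh', hx⟩ := hh.exists_closedBall_mem_nhds x
  have hpos : ∀ᶠ ε in 𝓝[>] (0 : ℝ), 0 < ε := self_mem_nhdsWithin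
  have hcont := (hh'.tendstoUniformlyOn_convolution_rieszKernelDeriv hs hs').continuousOn
    (hpos.mono fun ε hε ↦
      (hh.continuous_convolution_rieszKernelDeriv_of_pos hs hε).continuousOn).frequently
  exact hcont.continuousAt hx

theorem contDiff_convolution_rieszKernel (hh : IsBoundedDensity h A R) (hs : 0 ≤ s)
    (hs' : s + 1 < Module.finrank ℝ V) : ContDiff ℝ 1 (h ⋆[lsmul ℝ ℝ] rieszKernel s 0) :=
  contDiff_one_iff_hasFDerivAt.2 ⟨_, hh.continuous_convolution_rieszKernelDeriv hs hs',
    hh.hasFDerivAt_convolution_rieszKernel hs hs'⟩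

end IsBoundedDensity

lemma convolution_rieszKernel_map (T : V ≃ₗᵢ[ℝ] V) {h : V → ℝ} (hT : ∀ y, h (T y) = h y) (x : V) :
    (h ⋆[lsmul ℝ ℝ] rieszKernel s ε) (T x) = (h ⋆[lsmul ℝ ℝ] rieszKernel s ε) x := by
  simp only [convolution_lsmul]
  rw [← T.measurePreserving.integral_comp T.toHomeomorph.measurableEmbedding]
  simp only [hT, rieszKernel, ← map_sub, T.norm_map]

end Riesz

section Coordinates

@[simp] lemma mk3_apply_zero (a b c : ℝ) : mk3 a b c 0 = a := rfl
@[simp] lemma mk3_apply_one (a b c : ℝ) : mk3 a b c 1 = b := rfl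
@[simp] lemma mk3_apply_two (a b c : ℝ) : mk3 a b c 2 = c := rfl

@[simp] lemma emb_apply_zero (x : E3) : emb x 0 = x 0 := rfl
@[simp] lemma emb_apply_one (x : E3) : emb x 1 = x 1 := rfl
@[simp] lemma emb_apply_two (x : E3) : emb x 2 = 0 := rfl
@[simp] lemma emb_apply_three (x : E3) : emb x 3 = 0 := rfl
@[simp] lemma emb_apply_four (x : E3) : emb x 4 = x 2 := rfl

lemma cylRad_sq (x : E3) : cylRad x ^ 2 = x 0 ^ 2 + x 1 ^ 2 := Real.sq_sqrt (by positivity)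

lemma cylRad_smul (c : ℝ) (x : E3) : cylRad (c • x) = |c| * cylRad x := by
  rw [cylRad, cylRad, ← Real.sqrt_sq_eq_abs, ← Real.sqrt_mul (sq_nonneg c)]
  simp only [PiLp.smul_apply, smul_eq_mul, mul_pow, mul_add]

lemma norm_sq_eq_cylRad_sq_add (x : E3) : ‖x‖ ^ 2 = cylRad x ^ 2 + x 2 ^ 2 := by
  rw [EuclideanSpace.real_norm_sq_eq, Fin.sum_univ_three, cylRad_sq]

lemma norm_eq_of_cylRad_eq {x x' : E3} (hr : cylRad x = cylRad x') (hz : x 2 = x' 2) :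
    ‖x‖ = ‖x'‖ := by
  rw [← sq_eq_sq₀ (norm_nonneg _) (norm_nonneg _), norm_sq_eq_cylRad_sq_add,
    norm_sq_eq_cylRad_sq_add, hr, hz]

lemma axisym_iff {f : E3 → ℝ} :
    Axisym f ↔ ∀ x x', cylRad x = cylRad x' → x 2 = x' 2 → f x = f x' := by
  refine ⟨fun ⟨F, hF⟩ x x' hr hz ↦ by rw [hF, hF, hr, hz], fun h ↦
    ⟨fun r t ↦ f (mk3 r 0 t), fun x ↦ h _ _ ?_ rfl⟩⟩
  simp [cylRad, Real.sqrt_sq (Real.sqrt_nonneg _)]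

lemma norm_reflect3 (x : E3) : ‖reflect3 x‖ = ‖x‖ := by
  rw [← sq_eq_sq₀ (norm_nonneg _) (norm_nonneg _), norm_sq_eq_cylRad_sq_add,
    norm_sq_eq_cylRad_sq_add, cylRad_sq, cylRad_sq]
  simp [reflect3]

lemma reflect3_smul (c : ℝ) (x : E3) : reflect3 (c • x) = c • reflect3 x := by
  ext i
  fin_cases i <;> simp [reflect3]

/-- `emb` as a linear isometry. -/
def embIsometry : E3 →ₗᵢ[ℝ] E5 where
  toFun := emb
  map_add' x y := by ext i; fin_cases i <;> simp
  map_smul' c x := by ext i; fin_cases i <;> simp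
  norm_map' x := by
    rw [← sq_eq_sq₀ (norm_nonneg _) (norm_nonneg _), EuclideanSpace.real_norm_sq_eq,
      EuclideanSpace.real_norm_sq_eq]
    simp [Fin.sum_univ_five, Fin.sum_univ_three]

lemma norm_emb (x : E3) : ‖emb x‖ = ‖x‖ := embIsometry.norm_map x

lemma tilde_eq (f : E3 → ℝ) (y : E5) :
    tilde f y = f (mk3 (√(‖y‖ ^ 2 - y 4 ^ 2)) 0 (y 4)) := by
  rw [tilde, EuclideanSpace.real_norm_sq_eq, Fin.sum_univ_five, add_sub_cancel_right]

lemma IsBoundedDensity.tilde {f : E3 → ℝ} {A R : ℝ} (hf : IsBoundedDensity f A R) :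
    IsBoundedDensity (tilde f) A R where
  measurable := by
    refine hf.measurable.comp (Continuous.measurable ?_)
    simp only [mk3, WithLp.equiv_symm_apply]
    refine (PiLp.continuous_toLp 2 _).comp (continuous_pi fun i ↦ ?_)
    fin_cases i
    exacts [Continuous.sqrt (by fun_prop), continuous_const, PiLp.continuous_apply 2 _ 4]
  abs_le _ := hf.abs_le _
  support_subset y hy := by
    have hnorm : ‖mk3 (√(‖y‖ ^ 2 - y 4 ^ 2)) 0 (y 4)‖ = ‖y‖ := by
      have hy4 : y 4 ^ 2 ≤ ‖y‖ ^ 2 := sq_le_sq.2 (by simpa using PiLp.norm_apply_le y 4)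
      rw [← sq_eq_sq₀ (norm_nonneg _) (norm_nonneg _), norm_sq_eq_cylRad_sq_add, cylRad_sq]
      simp [Real.sq_sqrt (sub_nonneg.2 hy4)]
    rw [Function.mem_support, tilde_eq] at hy
    rw [mem_closedBall_zero_iff, ← hnorm]
    exact mem_closedBall_zero_iff.1 (hf.support_subset hy)

lemma contDiff_sq_add_sq : ContDiff ℝ 1 fun x : E3 ↦ (x 0) ^ 2 + (x 1) ^ 2 :=
  ((EuclideanSpace.proj 0 : E3 →L[ℝ] ℝ).contDiff.pow 2).add
    ((EuclideanSpace.proj 1 : E3 →L[ℝ] ℝ).contDiff.pow 2)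

lemma norm_fderiv_sq_add_sq_le (x : E3) :
    ‖fderiv ℝ (fun y : E3 ↦ (y 0) ^ 2 + (y 1) ^ 2) x‖ ≤ 4 * ‖x‖ := by
  have hcoord_sq (i : Fin 3) :
      ‖((2 : ℕ) • x i ^ (2 - 1)) • (EuclideanSpace.proj i : E3 →L[ℝ] ℝ)‖ ≤ 2 * ‖x‖ := by
    have hproj : ‖(EuclideanSpace.proj i : E3 →L[ℝ] ℝ)‖ ≤ 1 :=
      ContinuousLinearMap.opNorm_le_bound _ zero_le_one fun v ↦ by
        simpa using PiLp.norm_apply_le v i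
    rw [norm_smul, ← mul_one (2 * ‖x‖)]
    refine mul_le_mul ?_ hproj (norm_nonneg _) (by positivity)
    simpa using PiLp.norm_apply_le x i
  have hcoord (i : Fin 3) : HasFDerivAt (fun y : E3 ↦ (y i) ^ 2) _ x :=
    (EuclideanSpace.proj i : E3 →L[ℝ] ℝ).hasFDerivAt.pow 2
  have hsq : HasFDerivAt (fun y : E3 ↦ (y 0) ^ 2 + (y 1) ^ 2) _ x :=
    (hcoord 0).add (hcoord 1)
  rw [hsq.fderiv]
  exact (norm_add_le_of_le (hcoord_sq 0) (hcoord_sq 1)).trans_eq (by ring)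

lemma norm_fderiv_sq_add_sq_mul_le {u : E3 → ℝ} {x : E3} {p q R : ℝ}
    (hu : DifferentiableAt ℝ u x) (hp : ‖u x‖ ≤ p) (hq : ‖fderiv ℝ u x‖ ≤ q)
    (hx : x ∈ closedBall 0 R) :
    ‖fderiv ℝ (fun y : E3 ↦ ((y 0) ^ 2 + (y 1) ^ 2) * u y) x‖ ≤ (4 * p + R * q) * ‖x‖ := by
  have hxR := mem_closedBall_zero_iff.1 hx
  have hsq : ‖(x 0) ^ 2 + (x 1) ^ 2‖ ≤ R * ‖x‖ := by
    rw [← cylRad_sq, Real.norm_of_nonneg (sq_nonneg _)]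
    nlinarith [norm_sq_eq_cylRad_sq_add x, norm_nonneg x, sq_nonneg (x 2)]
  rw [fderiv_fun_mul (contDiff_sq_add_sq.differentiable one_ne_zero x) hu]
  calc _ ≤ ‖(x 0) ^ 2 + (x 1) ^ 2‖ * ‖fderiv ℝ u x‖
        + ‖u x‖ * ‖fderiv ℝ (fun y : E3 ↦ (y 0) ^ 2 + (y 1) ^ 2) x‖ :=
        norm_add_le_of_le (norm_smul_le _ _) (norm_smul_le _ _)
    _ ≤ (R * ‖x‖) * q + p * (4 * ‖x‖) := by
        have hR : 0 ≤ R := (norm_nonneg x).trans hxR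
        gcongr
        exacts [(norm_nonneg _).trans hp, norm_fderiv_sq_add_sq_le x]
    _ = (4 * p + R * q) * ‖x‖ := by ring

end Coordinates

section Linv

lemma Linv_eq_convolution (C₅ : ℝ) (f : E3 → ℝ) (x : E3) :
    Linv C₅ f x =
      C₅ * (((x 0) ^ 2 + (x 1) ^ 2) * (tilde f ⋆[lsmul ℝ ℝ] rieszKernel 3 0) (emb x)) := by
  rw [Linv, mul_assoc, convolution_lsmul]
  congr! 4 with y
  rw [rieszKernel_zero, Real.rpow_neg (norm_nonneg _), smul_eq_mul, mul_comm]
  norm_cast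

lemma contDiff_Linv {f : E3 → ℝ} {A R : ℝ} (hf : IsBoundedDensity f A R) (C₅ : ℝ) :
    ContDiff ℝ 1 (Linv C₅ f) := by
  have hpot : ContDiff ℝ 1 (tilde f ⋆[lsmul ℝ ℝ] rieszKernel 3 0) :=
    hf.tilde.contDiff_convolution_rieszKernel (by norm_num) (by norm_num)
  rw [funext (Linv_eq_convolution C₅ f)]
  exact contDiff_const.mul (contDiff_sq_add_sq.mul
    (hpot.comp embIsometry.toContinuousLinearMap.contDiff))

lemma exists_norm_fderiv_Linv_le (C₅ : ℝ) {R : ℝ} (hR : 0 ≤ R) :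
    ∃ B, 0 ≤ B ∧ ∀ f A, IsBoundedDensity f A R → ∀ x ∈ closedBall 0 R,
      ‖fderiv ℝ (Linv C₅ f) x‖ ≤ B * A * ‖x‖ := by
  set p := ∫ z in closedBall (0 : E5) (2 * R), ‖rieszKernel 3 0 z‖
  set q := ∫ z in closedBall (0 : E5) (2 * R), ‖rieszKernelDeriv 3 0 z‖
  have : 0 ≤ p := integral_nonneg fun _ ↦ norm_nonneg _
  have : 0 ≤ q := integral_nonneg fun _ ↦ norm_nonneg _
  refine ⟨|C₅| * (4 * p + R * q), by positivity, fun f A hf x hx ↦ ?_⟩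
  have hx' : emb x ∈ closedBall 0 R := by simpa [norm_emb] using hx
  have hpot := hf.tilde.hasFDerivAt_convolution_rieszKernel (s := 3) (by norm_num) (by norm_num)
    (emb x)
  have hu : HasFDerivAt (fun y ↦ (tilde f ⋆[lsmul ℝ ℝ] rieszKernel 3 0) (emb y)) _ x :=
    hpot.comp x embIsometry.toContinuousLinearMap.hasFDerivAt
  have hup := hf.tilde.norm_convolution_le
    (locallyIntegrable_rieszKernel (s := 3) (by norm_num) (by norm_num) le_rfl) hx'
  have huq : ‖fderiv ℝ (fun y ↦ (tilde f ⋆[lsmul ℝ ℝ] rieszKernel 3 0) (emb y)) x‖ ≤ A * q := by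
    rw [hu.fderiv]
    refine (ContinuousLinearMap.opNorm_comp_le _ _).trans ?_
    refine (mul_le_of_le_one_right (norm_nonneg _)
      embIsometry.norm_toContinuousLinearMap_le).trans ?_
    exact hf.tilde.norm_convolution_le
      (locallyIntegrable_rieszKernelDeriv (by norm_num) (by norm_num) le_rfl) hx'
  have hmul := norm_fderiv_sq_add_sq_mul_le hu.differentiableAt hup huq hx
  rw [funext (Linv_eq_convolution C₅ f), fderiv_const_mul
    ((contDiff_sq_add_sq.differentiable one_ne_zero x).fun_mul hu.differentiableAt), norm_smul,
    Real.norm_eq_abs]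
  calc _ ≤ |C₅| * ((4 * (A * p) + R * (A * q)) * ‖x‖) := by gcongr
    _ = |C₅| * (4 * p + R * q) * A * ‖x‖ := by ring

theorem axisym_Linv (C₅ : ℝ) (f : E3 → ℝ) : Axisym (Linv C₅ f) := by
  refine axisym_iff.2 fun x x' hr hz ↦ ?_
  have hnorm : ‖emb x'‖ = ‖emb x‖ := by
    rw [norm_emb, norm_emb, norm_eq_of_cylRad_eq hr hz]
  set T := (ℝ ∙ (emb x' - emb x))ᗮ.reflection
  have hT : T (emb x') = emb x := Submodule.reflection_sub hnorm
  have hT4 (y : E5) : T y 4 = y 4 := by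
    simp [T, Submodule.reflection_orthogonal, Submodule.reflection_singleton_apply, hz]
  have htilde (y : E5) : tilde f (T y) = tilde f y := by
    rw [tilde_eq, tilde_eq, T.norm_map, hT4]
  rw [Linv_eq_convolution, Linv_eq_convolution, ← hT, convolution_rieszKernel_map T htilde,
    ← cylRad_sq, ← cylRad_sq, hr]

theorem EvenZ.Linv {f : E3 → ℝ} (hf : EvenZ f) (C₅ : ℝ) : EvenZ (Linv C₅ f) := by
  intro x
  set T : E5 ≃ₗᵢ[ℝ] E5 := LinearIsometryEquiv.piLpCongrRight 2
    fun i : Fin 5 ↦ if i = 4 then .neg ℝ else .refl ℝ ℝ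
  have hT : T (emb x) = emb (reflect3 x) := by
    ext i
    fin_cases i <;> simp [T, reflect3]
  have htilde (y : E5) : tilde f (T y) = tilde f y := by
    rw [tilde_eq, tilde_eq, T.norm_map, ← hf]
    congr 1
    ext i
    fin_cases i <;> simp [T, reflect3]
  rw [Linv_eq_convolution, Linv_eq_convolution, ← hT, convolution_rieszKernel_map T htilde]
  rfl

end Linv

section Composition

variable {E F G : Type*} [NormedAddCommGroup E] [NormedSpace ℝ E] [NormedAddCommGroup F]
  [NormedSpace ℝ F] [NormedAddCommGroup G] [NormedSpace ℝ G] {Q : F → G} {g : E → F} {L : ℝ≥0}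
  {a : E}

lemma hasFDerivAt_comp_zero_of_lipschitzWith (hQ : HasFDerivAt Q (0 : F →L[ℝ] G) (g a))
    (hg : LipschitzWith L g) : HasFDerivAt (Q ∘ g) (0 : E →L[ℝ] G) a := by
  have hbig : (fun x ↦ g x - g a) =O[𝓝 a] fun x ↦ x - a :=
    Asymptotics.IsBigO.of_bound L (Eventually.of_forall fun x ↦ hg.norm_sub_le x a)
  refine .of_isLittleO ?_
  simpa [Function.comp_def] using
    (hQ.isLittleO.comp_tendsto hg.continuous.continuousAt).trans_isBigO hbig

lemma differentiable_comp_of_lipschitzWith (hQ : Differentiable ℝ Q) (hQa : fderiv ℝ Q (g a) = 0)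
    (hg : LipschitzWith L g) (hga : ∀ x ≠ a, DifferentiableAt ℝ g x) :
    Differentiable ℝ (Q ∘ g) := by
  intro x
  rcases eq_or_ne x a with rfl | hx
  · exact (hasFDerivAt_comp_zero_of_lipschitzWith (hQa ▸ (hQ _).hasFDerivAt) hg).differentiableAt
  · exact (hQ _).comp x (hga x hx)

lemma norm_fderiv_comp_le_of_lipschitzWith (hQ : Differentiable ℝ Q)
    (hQa : fderiv ℝ Q (g a) = 0) (hg : LipschitzWith L g)
    (hga : ∀ x ≠ a, DifferentiableAt ℝ g x) (x : E) :
    ‖fderiv ℝ (Q ∘ g) x‖ ≤ L * ‖fderiv ℝ Q (g x)‖ := by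
  rcases eq_or_ne x a with rfl | hx
  · rw [(hasFDerivAt_comp_zero_of_lipschitzWith (hQa ▸ (hQ _).hasFDerivAt) hg).fderiv, hQa]
    simp
  · rw [fderiv_comp x (hQ _) (hga x hx), mul_comm]
    refine (ContinuousLinearMap.opNorm_comp_le _ _).trans ?_
    gcongr
    exact norm_fderiv_le_of_lipschitz ℝ hg

theorem contDiff_comp_of_lipschitzWith (hQ : ContDiff ℝ 1 Q) (hQa : fderiv ℝ Q (g a) = 0)
    (hg : LipschitzWith L g) (hga : ∀ x ≠ a, ContDiffAt ℝ 1 g x) : ContDiff ℝ 1 (Q ∘ g) := by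
  have hQd := hQ.differentiable one_ne_zero
  have hgd (x) (hx : x ≠ a) := (hga x hx).differentiableAt one_ne_zero
  refine contDiff_one_iff_fderiv.2 ⟨differentiable_comp_of_lipschitzWith hQd hQa hg hgd,
    continuous_iff_continuousAt.2 fun x ↦ ?_⟩
  rcases eq_or_ne x a with rfl | hx
  · have hcont : Continuous fun y ↦ L * ‖fderiv ℝ Q (g y)‖ :=
      continuous_const.mul ((hQ.continuous_fderiv one_ne_zero).comp hg.continuous).norm
    have hzero : fderiv ℝ (Q ∘ g) x = 0 := by
      simpa [hQa] using norm_fderiv_comp_le_of_lipschitzWith hQd hQa hg hgd x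
    rw [ContinuousAt, hzero]
    exact squeeze_zero_norm (norm_fderiv_comp_le_of_lipschitzWith hQd hQa hg hgd)
      (by simpa [hQa] using hcont.tendsto x)
  · exact ((hQ.contDiffAt.comp x (hga x hx)).fderiv_right (m := 0) (by simp)).continuousAt

end Composition

section Deformation

lemma norm_div_norm_sq_smul_sub_le {V : Type*} [NormedAddCommGroup V] [InnerProductSpace ℝ V]
    {x y : V} {a b δ : ℝ} (ha : |a| ≤ δ * ‖x‖ ^ 2) (hab : |b - a| ≤ δ * ‖y‖ * ‖y - x‖)
    (hxy : ‖x‖ ≤ ‖y‖) :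
    ‖(b / ‖y‖ ^ 2) • y - (a / ‖x‖ ^ 2) • x‖ ≤ 2 * δ * ‖y - x‖ := by
  rcases eq_or_ne y 0 with rfl | hy
  · obtain rfl : x = 0 := by simpa using hxy
    simp
  have hy' : 0 < ‖y‖ := norm_pos_iff.2 hy
  have hradial : ‖((b - a) / ‖y‖ ^ 2) • y‖ ≤ δ * ‖y - x‖ := by
    rw [norm_smul, norm_div, norm_pow, norm_norm, Real.norm_eq_abs, div_mul_eq_mul_div,
      div_le_iff₀ (by positivity)]
    calc |b - a| * ‖y‖ ≤ δ * ‖y‖ * ‖y - x‖ * ‖y‖ := by gcongr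
      _ = δ * ‖y - x‖ * ‖y‖ ^ 2 := by ring
  have hinversion : ‖a • ((1 / ‖y‖) ^ 2 • y - (1 / ‖x‖) ^ 2 • x)‖ ≤ δ * ‖y - x‖ := by
    rcases eq_or_ne x 0 with rfl | hx
    · obtain rfl : a = 0 := by simpa using ha
      rw [zero_smul, norm_zero]
      exact (norm_nonneg _).trans hradial
    have : 0 < ‖x‖ := norm_pos_iff.2 hx
    have hδ : 0 ≤ δ := nonneg_of_mul_nonneg_left ((abs_nonneg a).trans ha) (by positivity)
    have hdist := dist_div_norm_sq_smul hy hx 1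
    rw [dist_eq_norm, dist_eq_norm] at hdist
    rw [norm_smul, hdist, Real.norm_eq_abs]
    calc |a| * (1 ^ 2 / (‖y‖ * ‖x‖) * ‖y - x‖)
        ≤ (δ * ‖x‖ ^ 2) * (1 ^ 2 / (‖y‖ * ‖x‖) * ‖y - x‖) := by gcongr
      _ = (δ * ‖y - x‖) * (‖x‖ / ‖y‖) := by field_simp
      _ ≤ δ * ‖y - x‖ := mul_le_of_le_one_right (by positivity) ((div_le_one hy').2 hxy)
  have hsplit : (b / ‖y‖ ^ 2) • y - (a / ‖x‖ ^ 2) • x =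
      ((b - a) / ‖y‖ ^ 2) • y + a • ((1 / ‖y‖) ^ 2 • y - (1 / ‖x‖) ^ 2 • x) := by
    module
  rw [hsplit]
  linarith [norm_add_le_of_le hradial hinversion]

@[simp] lemma gdef_zero (ζ : E3 → ℝ) : gdef ζ 0 = 0 := by simp [gdef]

lemma contDiffAt_gdef {ζ : E3 → ℝ} {x : E3} (hζ : ContDiffAt ℝ 1 ζ x) (hx : x ≠ 0) :
    ContDiffAt ℝ 1 (gdef ζ) x :=
  (contDiffAt_const.add (hζ.div (contDiff_norm_sq ℝ).contDiffAt (by positivity))).smul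
    contDiffAt_id

lemma EvenZ.gdef_reflect3 {ζ : E3 → ℝ} (hζ : EvenZ ζ) (x : E3) :
    gdef ζ (reflect3 x) = reflect3 (gdef ζ x) := by
  rw [gdef, gdef, hζ, norm_reflect3, reflect3_smul]

lemma Axisym.comp_gdef {q ζ : E3 → ℝ} (hq : Axisym q) (hζ : Axisym ζ) :
    Axisym (q ∘ gdef ζ) := by
  rw [axisym_iff] at hq hζ ⊢
  intro x x' hr hz
  refine hq _ _ ?_ ?_ <;>
    simp [gdef, cylRad_smul, hζ x x' hr hz, norm_eq_of_cylRad_eq hr hz, hr, hz]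

namespace InXext

variable {δ : ℝ} {ζ : E3 → ℝ}

lemma abs_sub_le (hζ : InXext δ ζ) {x y : E3} (hxy : ‖x‖ ≤ ‖y‖) :
    |ζ y - ζ x| ≤ δ * ‖y‖ * ‖y - x‖ := by
  obtain ⟨hdiff, -, -, -, hbound⟩ := hζ
  have hδ : 0 ≤ δ := by
    simpa using (norm_nonneg _).trans (hbound (EuclideanSpace.single 0 1))
  refine (convex_closedBall (0 : E3) ‖y‖).norm_image_sub_le_of_norm_fderiv_le (𝕜 := ℝ)
    (fun z _ ↦ hdiff.differentiable one_ne_zero z) (fun z hz ↦ ?_)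
    (mem_closedBall_zero_iff.2 hxy) (mem_closedBall_zero_iff.2 le_rfl)
  have := mem_closedBall_zero_iff.1 hz
  exact (hbound z).trans (by gcongr)

lemma norm_gdef_sub_sub_le (hζ : InXext δ ζ) (x y : E3) :
    ‖gdef ζ y - gdef ζ x - (y - x)‖ ≤ 2 * δ * ‖y - x‖ := by
  have habs (z : E3) : |ζ z| ≤ δ * ‖z‖ ^ 2 := by
    simpa [hζ.2.2.2.1, sq, mul_assoc] using hζ.abs_sub_le (x := 0) (y := z) (by simp)
  have hsplit : gdef ζ y - gdef ζ x - (y - x) = (ζ y / ‖y‖ ^ 2) • y - (ζ x / ‖x‖ ^ 2) • x := by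
    unfold gdef
    module
  rw [hsplit]
  rcases le_total ‖x‖ ‖y‖ with hxy | hxy
  · exact norm_div_norm_sq_smul_sub_le (habs x) (hζ.abs_sub_le hxy) hxy
  · rw [norm_sub_rev, norm_sub_rev y]
    exact norm_div_norm_sq_smul_sub_le (habs y) (hζ.abs_sub_le hxy) hxy

variable (hζ : InXext δ ζ) (hδ : δ < 1 / 2)
include hζ hδ

lemma lipschitzWith_gdef : LipschitzWith 2 (gdef ζ) := by
  refine LipschitzWith.of_dist_le_mul fun y x ↦ ?_
  rw [dist_eq_norm, dist_eq_norm, NNReal.coe_ofNat]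
  have hnear := hζ.norm_gdef_sub_sub_le x y
  have htri := norm_sub_norm_le (gdef ζ y - gdef ζ x) (y - x)
  have := mul_le_mul_of_nonneg_right hδ.le (norm_nonneg (y - x))
  linarith

theorem isHomeomorph_gdef : IsHomeomorph (gdef ζ) := by
  have hnear : ApproximatesLinearOn (gdef ζ) (ContinuousLinearEquiv.refl ℝ E3 : E3 →L[ℝ] E3) univ
      (2 * δ).toNNReal := fun y _ x _ ↦ (hζ.norm_gdef_sub_sub_le x y).trans <|
    mul_le_mul_of_nonneg_right (Real.le_coe_toNNReal _) (norm_nonneg _)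
  have hnorm : ‖((ContinuousLinearEquiv.refl ℝ E3).symm : E3 →L[ℝ] E3)‖₊ = 1 :=
    NNReal.coe_injective ContinuousLinearMap.norm_id
  have hc : (2 * δ).toNNReal < ‖((ContinuousLinearEquiv.refl ℝ E3).symm : E3 →L[ℝ] E3)‖₊⁻¹ := by
    rw [hnorm, inv_one, Real.toNNReal_lt_one]
    linarith
  exact (hnear.toHomeomorph (gdef ζ) (Or.inr hc)).isHomeomorph

lemma gdef_ginv (z : E3) : gdef ζ (ginv ζ z) = z :=
  Function.rightInverse_invFun (hζ.isHomeomorph_gdef hδ).surjective z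

lemma ginv_gdef (x : E3) : ginv ζ (gdef ζ x) = x :=
  Function.leftInverse_invFun (hζ.isHomeomorph_gdef hδ).injective x

lemma continuous_ginv : Continuous (ginv ζ) := by
  have heq : ginv ζ = ((hζ.isHomeomorph_gdef hδ).homeomorph (gdef ζ)).symm := by
    ext1 z
    rw [Homeomorph.eq_symm_apply]
    exact hζ.gdef_ginv hδ z
  rw [heq]
  exact Homeomorph.continuous _

lemma ginv_reflect3 (z : E3) : ginv ζ (reflect3 z) = reflect3 (ginv ζ z) := by
  conv_lhs => rw [← hζ.gdef_ginv hδ z, ← hζ.2.2.1.gdef_reflect3, hζ.ginv_gdef hδ]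

lemma isBoundedDensity_comp_ginv {w : E3 → ℝ} {A R : ℝ} (hw : IsBoundedDensity w A R) :
    IsBoundedDensity (w ∘ ginv ζ) A (2 * R) where
  measurable := hw.measurable.comp (hζ.continuous_ginv hδ).measurable
  abs_le _ := hw.abs_le _
  support_subset z hz := by
    have hR : ‖ginv ζ z‖ ≤ R := mem_closedBall_zero_iff.1 (hw.support_subset hz)
    have hlip := (hζ.lipschitzWith_gdef hδ).norm_sub_le (ginv ζ z) 0
    rw [hζ.gdef_ginv hδ, gdef_zero, sub_zero, sub_zero, NNReal.coe_ofNat] at hlip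
    exact mem_closedBall_zero_iff.2 (hlip.trans (by gcongr))

end InXext

end Deformation

section XSpace

lemma xnormLe_of_norm_fderiv_le {f : E3 → ℝ} {N : ℝ} (hf : Differentiable ℝ f)
    (hN : ∀ x ∈ closedBall (0 : E3) 1, ‖fderiv ℝ f x‖ ≤ N * ‖x‖) : XnormLe f N := fun x hx ↦ by
  have hball := uniqueDiffOn_convex (convex_closedBall (0 : E3) 1) (by simp [interior_closedBall])
  rw [gradB, (hf x).fderivWithin (hball x hx)]
  exact hN x hx

lemma XnormLe.nonneg {f : E3 → ℝ} {N : ℝ} (hf : XnormLe f N) : 0 ≤ N := by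
  simpa using (norm_nonneg _).trans (hf (EuclideanSpace.single 0 1) (by simp))

lemma XnormLe.mono {f : E3 → ℝ} {N N' : ℝ} (hf : XnormLe f N) (hN : N ≤ N') : XnormLe f N' :=
  fun x hx ↦ (hf x hx).trans (mul_le_mul_of_nonneg_right hN (norm_nonneg x))

lemma InX.abs_le {f : E3 → ℝ} {N : ℝ} (hf : InX f) (hN : XnormLe f N) {x : E3}
    (hx : x ∈ closedBall (0 : E3) 1) : |f x| ≤ N := by
  have hgrad : ∀ z ∈ closedBall (0 : E3) 1, ‖gradB f z‖ ≤ N := fun z hz ↦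
    (hN z hz).trans (mul_le_of_le_one_right hN.nonneg (mem_closedBall_zero_iff.1 hz))
  have hmean := (convex_closedBall (0 : E3) 1).norm_image_sub_le_of_norm_fderivWithin_le
    (hf.1.differentiableOn one_ne_zero) hgrad (mem_closedBall_self zero_le_one) hx
  rw [hf.2.2.2.1, sub_zero, sub_zero] at hmean
  exact hmean.trans (mul_le_of_le_one_right hN.nonneg (mem_closedBall_zero_iff.1 hx))

lemma fderiv_Linv_zero {f : E3 → ℝ} {A R : ℝ} (hf : IsBoundedDensity f A R) (C₅ : ℝ) :
    fderiv ℝ (Linv C₅ f) 0 = 0 := by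
  obtain ⟨B, -, hB⟩ := exists_norm_fderiv_Linv_le C₅ (le_max_right R 0)
  simpa using hB f A (hf.mono (le_max_left R 0)) 0 (by simp)

namespace InXext

variable {δ : ℝ} {ζ f : E3 → ℝ} {A R : ℝ} (hζ : InXext δ ζ) (hδ : δ < 1 / 2)
  (hf : IsBoundedDensity f A R) (C₅ : ℝ)
include hζ hδ hf

lemma contDiff_Linv_comp_gdef : ContDiff ℝ 1 (Linv C₅ f ∘ gdef ζ) := by
  refine contDiff_comp_of_lipschitzWith (a := 0) (contDiff_Linv hf C₅) ?_
    (hζ.lipschitzWith_gdef hδ) fun x ↦ contDiffAt_gdef hζ.1.contDiffAt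
  rw [gdef_zero, fderiv_Linv_zero hf]

lemma norm_fderiv_Linv_comp_gdef_le (x : E3) :
    ‖fderiv ℝ (Linv C₅ f ∘ gdef ζ) x‖ ≤ 2 * ‖fderiv ℝ (Linv C₅ f) (gdef ζ x)‖ := by
  refine norm_fderiv_comp_le_of_lipschitzWith (a := 0)
    ((contDiff_Linv hf C₅).differentiable one_ne_zero) ?_ (hζ.lipschitzWith_gdef hδ)
    (fun y hy ↦ (contDiffAt_gdef hζ.1.contDiffAt hy).differentiableAt one_ne_zero) x
  rw [gdef_zero, fderiv_Linv_zero hf]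

end InXext

theorem exists_inX_xnormLe_Linv_comp_gdef (C₅ : ℝ) :
    ∃ B, ∀ δ < 1 / 2, ∀ ζ, InXext δ ζ → ∀ w A, IsBoundedDensity w A 1 → EvenZ w →
      InX (Linv C₅ (w ∘ ginv ζ) ∘ gdef ζ) ∧ XnormLe (Linv C₅ (w ∘ ginv ζ) ∘ gdef ζ) (B * A) := by
  obtain ⟨B, hB, hbound⟩ := exists_norm_fderiv_Linv_le C₅ (R := 2 * 1) (by norm_num)
  refine ⟨4 * B, fun δ hδ ζ hζ w A hw hwe ↦ ?_⟩
  have hsource := hζ.isBoundedDensity_comp_ginv hδ hw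
  have hcont := hζ.contDiff_Linv_comp_gdef hδ hsource C₅
  have hnorm : XnormLe (Linv C₅ (w ∘ ginv ζ) ∘ gdef ζ) (4 * B * A) := by
    refine xnormLe_of_norm_fderiv_le (hcont.differentiable one_ne_zero) fun x hx ↦ ?_
    have hgx : ‖gdef ζ x‖ ≤ 2 * ‖x‖ := by
      simpa using (hζ.lipschitzWith_gdef hδ).norm_sub_le x 0
    have hgx' : gdef ζ x ∈ closedBall 0 (2 * 1) := mem_closedBall_zero_iff.2 <|
      hgx.trans (by linarith [mem_closedBall_zero_iff.1 hx])
    calc ‖fderiv ℝ (Linv C₅ (w ∘ ginv ζ) ∘ gdef ζ) x‖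
        ≤ 2 * ‖fderiv ℝ (Linv C₅ (w ∘ ginv ζ)) (gdef ζ x)‖ :=
          hζ.norm_fderiv_Linv_comp_gdef_le hδ hsource C₅ x
      _ ≤ 2 * (B * A * ‖gdef ζ x‖) := by
          gcongr
          exact hbound _ _ hsource _ hgx'
      _ ≤ 2 * (B * A * (2 * ‖x‖)) := by
          have := hw.nonneg
          gcongr
      _ = 4 * B * A * ‖x‖ := by ring
  have heven : EvenZ (w ∘ ginv ζ) := fun z ↦ by
    rw [Function.comp_apply, hζ.ginv_reflect3 hδ, hwe, Function.comp_apply]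
  obtain ⟨F, hF⟩ := (axisym_Linv C₅ (w ∘ ginv ζ)).comp_gdef hζ.2.1
  refine ⟨⟨hcont.contDiffOn, ⟨F, fun x _ ↦ hF x⟩, fun x _ ↦ ?_, ?_, _, hnorm⟩, hnorm⟩
  · simp only [Function.comp_apply, hζ.2.2.1.gdef_reflect3, heven.Linv C₅ _]
  · simp [Linv]

lemma EvenZ.mul_of_support_subset {ρ u : E3 → ℝ} {R : ℝ} (hρ : EvenZ ρ)
    (hsupp : Function.support ρ ⊆ closedBall 0 R)
    (hu : ∀ x ∈ closedBall (0 : E3) R, u (reflect3 x) = u x) : EvenZ (ρ * u) := fun x ↦ by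
  rw [Pi.mul_apply, Pi.mul_apply, hρ]
  by_cases hx : ρ x = 0
  · rw [hx, zero_mul, zero_mul]
  · rw [hu x (hsupp hx)]

theorem dF3_dphi_bounded_on_X_general {δ r : ℝ} (hδ : δ < 1 / 2) (C₅ : ℝ) {k : ℝ → ℝ}
    (hk : ContDiff ℝ 1 k) (M : ℝ) :
    ∃ C : ℝ, 0 < C ∧
      ∀ ρ₀ : E3 → ℝ, Measurable ρ₀ → (∀ x, |ρ₀ x| ≤ M) →
        EvenZ ρ₀ → Function.support ρ₀ ⊆ closedBall (0:E3) 1 →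
        ∀ ζ : E3 → ℝ, InXext δ ζ →
          ∀ φ : E3 → ℝ, InX φ → XnormLe φ r →
            ∀ η : E3 → ℝ, InX η →
              InX (fun x => Linv C₅
                    (fun z => ρ₀ (ginv ζ z) * deriv k (φ (ginv ζ z))
                      * η (ginv ζ z)) (gdef ζ x)) ∧
              ∀ N : ℝ, XnormLe η N →
                XnormLe (fun x => Linv C₅
                    (fun z => ρ₀ (ginv ζ z) * deriv k (φ (ginv ζ z))
                      * η (ginv ζ z)) (gdef ζ x)) (C * N) := by
  obtain ⟨B, hB⟩ := exists_inX_xnormLe_Linv_comp_gdef C₅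
  have hk' : Continuous (deriv k) := hk.continuous_deriv_one
  obtain ⟨K, hK⟩ := (isCompact_Icc (a := -r) (b := r)).exists_bound_of_continuousOn
    hk'.continuousOn
  refine ⟨|B * (M * K)| + 1, by positivity, fun ρ₀ hmeas hM heven hsupp ζ hζ φ hφ hφr η hη ↦ ?_⟩
  have hφball (x) (hx : x ∈ closedBall (0 : E3) 1) : |deriv k (φ x)| ≤ K :=
    hK _ (abs_le.1 (hφ.abs_le hφr hx))
  have hK₀ : 0 ≤ K := (abs_nonneg _).trans (hφball 0 (by simp))
  have hdensity : IsBoundedDensity (ρ₀ * (deriv k ∘ φ)) (M * K) 1 :=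
    IsBoundedDensity.mul_of_continuousOn ⟨hmeas, hM, hsupp⟩
      (hk'.comp_continuousOn hφ.1.continuousOn) hK₀ hφball
  have hw_even : EvenZ (ρ₀ * (deriv k ∘ φ) * η) :=
    have hρφ : EvenZ (ρ₀ * (deriv k ∘ φ)) :=
      heven.mul_of_support_subset hsupp fun x hx ↦ congrArg (deriv k) (hφ.2.2.1 x hx)
    hρφ.mul_of_support_subset hdensity.support_subset hη.2.2.1
  have hT {N : ℝ} (hN : XnormLe η N) := hB δ hδ ζ hζ _ _
    (hdensity.mul_of_continuousOn hη.1.continuousOn hN.nonneg fun x hx ↦ hη.abs_le hN hx) hw_even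
  refine ⟨(hT hη.2.2.2.2.choose_spec).1, fun N hN ↦ (hT hN).2.mono ?_⟩
  rw [← mul_assoc]
  exact mul_le_mul_of_nonneg_right ((le_abs_self _).trans (by linarith)) hN.nonneg

end XSpace

/-- for δ sufficiently small, ζ, φ ∈ X_δ, ρ₀ bounded measurable
axisymmetric even in x₃ and supported in B̄₁, and k ∈ C²(ℝ), the linear map
(Tη)(x) = L⁻¹[(ρ₀∘g_ζ⁻¹)(k'∘φ∘g_ζ⁻¹)(η∘g_ζ⁻¹)](g_ζ(x)) is well defined and bounded
on X: Tη ∈ X and ‖Tη‖_X ≤ C‖η‖_X for a constant C depending only on ‖ρ₀‖_{L∞}, k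
and δ. -/
theorem dF3_dphi_bounded_on_X :
    ∃ δ : ℝ, 0 < δ ∧
      ∀ C₅ : ℝ, 0 < C₅ →
        ∀ k : ℝ → ℝ, ContDiff ℝ 2 k →
          ∀ M : ℝ, 0 < M →
            ∃ C : ℝ, 0 < C ∧
              ∀ ρ₀ : E3 → ℝ, Measurable ρ₀ → (∀ x, |ρ₀ x| ≤ M) →
                Axisym ρ₀ → EvenZ ρ₀ → Function.support ρ₀ ⊆ closedBall (0:E3) 1 →
                ∀ ζ : E3 → ℝ, InXext δ ζ →
                  ∀ φ : E3 → ℝ, InX φ → XnormLe φ δ →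
                    ∀ η : E3 → ℝ, InX η →
                      InX (fun x => Linv C₅
                            (fun z => ρ₀ (ginv ζ z) * deriv k (φ (ginv ζ z))
                              * η (ginv ζ z)) (gdef ζ x)) ∧
                      ∀ N : ℝ, XnormLe η N →
                        XnormLe (fun x => Linv C₅
                            (fun z => ρ₀ (ginv ζ z) * deriv k (φ (ginv ζ z))
                              * η (ginv ζ z)) (gdef ζ x)) (C * N) := by
  refine ⟨1 / 4, by norm_num, fun C₅ _ k hk M _ ↦ ?_⟩
  obtain ⟨C, hC, h⟩ := dF3_dphi_bounded_on_X_general (δ := 1 / 4) (by norm_num) C₅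
    (hk.of_le one_le_two) M
  exact ⟨C, hC, fun ρ₀ hmeas hM _ ↦ h ρ₀ hmeas hM⟩
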